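/- arXiv:1801.09089 — 6 statements merged into one kernel-verified Lean document; each statement's English description precedes it below -/
import Mathlib

section
/- For every finite sequence S = ⟨J_1,...,J_n⟩ of two-stage jobs, where J_i = (r_i,t_i) with r_i, t_i ≥ 0, the completion time of S on a single two-stage flowshop equals the completion time of the dual schedule S^d = ⟨J_n^d,...,J_1^d⟩ on the dual jobs, where J_i^d = (t_i,r_i). That is, C(S) = C(S^d). -/
/-- Adding a job `(r, t)` to a flowshop with status `(ρ, τ)` (completion times of the
R-processor and T-processor) yields the status `(ρ + r, max (ρ + r) τ + t)`. -/
def stepFS (s j : ℝ × ℝ) : ℝ × ℝ := (s.1 + j.1, max (s.1 + j.1) s.2 + j.2)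

/-- The status `(ρ, τ)` of a two-stage flowshop after processing a sequence of two-stage
jobs, starting from `(0, 0)`. -/
def statusFS (L : List (ℝ × ℝ)) : ℝ × ℝ := L.foldl stepFS (0, 0)

/-- The completion time of a sequence of two-stage jobs on a single two-stage flowshop. -/
def compFS (L : List (ℝ × ℝ)) : ℝ := (statusFS L).2

/-- The dual job of a two-stage job `(r, t)` is the job `(t, r)`. -/
def dualJob (j : ℝ × ℝ) : ℝ × ℝ := (j.2, j.1)

theorem foldl_dual_aux (L : List (ℝ × ℝ)) (hL : ∀ j ∈ L, 0 ≤ j.1 ∧ 0 ≤ j.2) :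
    (statusFS ((L.map dualJob).reverse)).1 ≤ (statusFS ((L.map dualJob).reverse)).2 ∧
    ∀ a b : ℝ, a ≤ b → (L.foldl stepFS (a, b)).2 =
      max (a + (statusFS ((L.map dualJob).reverse)).2)
        (b + (statusFS ((L.map dualJob).reverse)).1) := by
  induction L with
  | nil =>
    refine ⟨by simp [statusFS], fun a b hab => ?_⟩
    simp [statusFS, hab]
  | cons j L ih =>
    obtain ⟨h1, h2⟩ := ih (fun x hx => hL x (List.mem_cons_of_mem _ hx))
    obtain ⟨hr, ht⟩ := hL j List.mem_cons_self
    have hs : statusFS (((j :: L).map dualJob).reverse)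
        = stepFS (statusFS ((L.map dualJob).reverse)) (dualJob j) := by
      simp [statusFS, List.foldl_append]
    rw [hs]
    generalize statusFS ((L.map dualJob).reverse) = s at *
    refine ⟨?_, fun a b hab => ?_⟩
    · simp only [stepFS, dualJob]
      have := le_max_left (s.1 + j.2) s.2
      linarith
    · have h := h2 (a + j.1) (max (a + j.1) b + j.2) (by
        have := le_max_left (a + j.1) b
        linarith)
      simp only [List.foldl_cons, stepFS, dualJob] at h ⊢
      rw [h]
      grind

/-- The completion time of a job sequence on a single two-stage flowshop equals the
completion time of the reversed sequence of dual jobs. -/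
theorem stmt3 (L : List (ℝ × ℝ)) (hL : ∀ j ∈ L, 0 ≤ j.1 ∧ 0 ≤ j.2) :
    compFS L = compFS ((L.map dualJob).reverse) := by
  obtain ⟨h1, h2⟩ := foldl_dual_aux L hL
  have h := h2 0 0 le_rfl
  rw [zero_add, zero_add, max_eq_left h1] at h
  exact h
end

section
/- Let G = {J_1,...,J_n} be a finite set of two-stage jobs, where J_i = (r_i,t_i) with r_i,t_i ≥ 0, and let G^d = {J_1^d,...,J_n^d} be the dual job set, where J_i^d = (t_i,r_i). On a single two-stage flowshop, the minimum completion time over all orderings of G equals the minimum completion time over all orderings of G^d: min over permutations σ of C(⟨J_{σ(1)},...,J_{σ(n)}⟩) equals min over permutations π of C(⟨J_{π(1)}^d,...,J_{π(n)}^d⟩). -/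
def critFS : List (ℝ × ℝ) → ℝ
  | [] => 0
  | j :: L => max (j.1 + j.2 + (L.map Prod.snd).sum) (j.1 + critFS L)

lemma foldFS_snd (L : List (ℝ × ℝ)) (hL : ∀ j ∈ L, 0 ≤ j.1 ∧ 0 ≤ j.2) :
    ∀ ρ τ : ℝ, ρ ≤ τ →
      (L.foldl stepFS (ρ, τ)).2 = max (τ + (L.map Prod.snd).sum) (ρ + critFS L) := by
  induction L with
  | nil => intro ρ τ h; simp [critFS, h]
  | cons j L ih =>
    intro ρ τ h
    have hj := hL j (by simp)
    have h1 : ρ + j.1 ≤ max (ρ + j.1) τ + j.2 := by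
      have := le_max_left (ρ + j.1) τ
      linarith
    rw [List.foldl_cons]
    simp only [stepFS]
    rw [ih (fun x hx => hL x (by simp [hx])) _ _ h1]
    simp only [critFS, List.map_cons, List.sum_cons]
    grind

lemma sum_le_critFS (L : List (ℝ × ℝ)) (hL : ∀ j ∈ L, 0 ≤ j.1 ∧ 0 ≤ j.2) :
    (L.map Prod.snd).sum ≤ critFS L := by
  cases L with
  | nil => simp [critFS]
  | cons j L =>
    have hj := hL j (by simp)
    simp only [critFS, List.map_cons, List.sum_cons]
    apply le_max_of_le_left
    linarith

lemma compFS_eq_crit (L : List (ℝ × ℝ)) (hL : ∀ j ∈ L, 0 ≤ j.1 ∧ 0 ≤ j.2) :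
    compFS L = critFS L := by
  unfold compFS statusFS
  rw [foldFS_snd L hL 0 0 le_rfl]
  simpa using sum_le_critFS L hL

lemma foldFS_fst (L : List (ℝ × ℝ)) : ∀ s : ℝ × ℝ,
    (L.foldl stepFS s).1 = s.1 + (L.map Prod.fst).sum := by
  induction L with
  | nil => simp
  | cons j L ih => intro s; rw [List.foldl_cons, ih]; simp [stepFS, add_assoc]

lemma compFS_dual_crit (L : List (ℝ × ℝ)) :
    compFS (L.map dualJob).reverse = critFS L := by
  induction L with
  | nil => simp [compFS, statusFS, critFS]
  | cons j L ih =>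
    have h1 : (statusFS (L.map dualJob).reverse).1 = (L.map Prod.snd).sum := by
      unfold statusFS
      rw [foldFS_fst, List.map_reverse, List.sum_reverse, List.map_map]
      simp only [zero_add]
      rfl
    have h2 : compFS ((j :: L).map dualJob).reverse
        = max ((statusFS (L.map dualJob).reverse).1 + j.2)
            (compFS (L.map dualJob).reverse) + j.1 := by
      simp [compFS, statusFS, stepFS, dualJob]
    rw [h2, ih, h1]
    simp only [critFS]
    grind

lemma compFS_dual (L : List (ℝ × ℝ)) (hL : ∀ j ∈ L, 0 ≤ j.1 ∧ 0 ≤ j.2) :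
    compFS (L.map dualJob).reverse = compFS L := by
  rw [compFS_dual_crit, compFS_eq_crit L hL]

/-- On a single two-stage flowshop, the minimum completion time over all orderings of a
finite job set equals the minimum completion time over all orderings of the dual job set. -/
theorem stmt4 (L : List (ℝ × ℝ)) (hL : ∀ j ∈ L, 0 ≤ j.1 ∧ 0 ≤ j.2) :
    sInf {c : ℝ | ∃ L' : List (ℝ × ℝ), L'.Perm L ∧ compFS L' = c} =
      sInf {c : ℝ | ∃ L' : List (ℝ × ℝ), L'.Perm (L.map dualJob) ∧ compFS L' = c} := by
  have hdd : ∀ M : List (ℝ × ℝ), (M.map dualJob).map dualJob = M := by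
    intro M
    rw [List.map_map]
    exact List.map_id M
  congr 1
  ext c
  constructor
  · rintro ⟨M, hM, rfl⟩
    exact ⟨(M.map dualJob).reverse, (List.reverse_perm _).trans (hM.map _),
      compFS_dual M fun j hj => hL j (hM.subset hj)⟩
  · rintro ⟨M, hM, rfl⟩
    refine ⟨(M.map dualJob).reverse, ?_, compFS_dual M fun j hj => ?_⟩
    · have h := (List.reverse_perm (M.map dualJob)).trans (hM.map dualJob)
      rwa [hdd] at h
    · obtain ⟨x, hx, rfl⟩ := List.mem_map.1 (hM.subset hj)
      exact ⟨(hL x hx).2, (hL x hx).1⟩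
end

section
/- Let G = {J_1,...,J_n} be a finite set of two-stage jobs and G^d its dual job set. For every m ≥ 1, the minimum makespan over all schedules of G on m identical two-stage flowshops equals the minimum makespan over all schedules of G^d on m identical two-stage flowshops. Moreover, if a schedule S is optimal for G, then replacing the job sequence assigned to each flowshop by its reversed dual sequence (of the corresponding dual jobs) yields an optimal schedule for G^d with the same makespan. -/
/-- A schedule of a job set (given as a list `L`) on `m` two-stage flowshops: an assignment
`S` of a job sequence to each flowshop such that, all together, exactly the jobs of `L`
are processed. -/
def IsSchedule (m : ℕ) (L : List (ℝ × ℝ)) (S : Fin m → List (ℝ × ℝ)) : Prop :=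
  (List.ofFn S).flatten.Perm L

/-- The makespan of a schedule on `m ≥ 1` flowshops: the maximum over the `m` flowshops of
the completion time of the job sequence assigned to that flowshop. -/
noncomputable def makespan {m : ℕ} (hm : 0 < m) (S : Fin m → List (ℝ × ℝ)) : ℝ :=
  Finset.univ.sup' ⟨⟨0, hm⟩, Finset.mem_univ _⟩ fun h => compFS (S h)

/-- The reversed dual sequence. -/
def revDual (L : List (ℝ × ℝ)) : List (ℝ × ℝ) := (L.map dualJob).reverse

theorem dualJob_dualJob (j : ℝ × ℝ) : dualJob (dualJob j) = j := rfl

theorem map_dual_dual (L : List (ℝ × ℝ)) : (L.map dualJob).map dualJob = L := by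
  induction L with
  | nil => rfl
  | cons j L ih => simp only [List.map_cons, ih, dualJob_dualJob]

theorem revDual_revDual (L : List (ℝ × ℝ)) : revDual (revDual L) = L := by
  unfold revDual
  rw [List.map_reverse, List.reverse_reverse, map_dual_dual]

theorem statusFS_append (L : List (ℝ × ℝ)) (j : ℝ × ℝ) :
    statusFS (L ++ [j]) = stepFS (statusFS L) j := by
  simp [statusFS, List.foldl_append]

theorem revDual_cons (j : ℝ × ℝ) (L : List (ℝ × ℝ)) :
    revDual (j :: L) = revDual L ++ [dualJob j] := by
  simp [revDual]

theorem foldl_eq (L : List (ℝ × ℝ)) (hL : ∀ j ∈ L, 0 ≤ j.1 ∧ 0 ≤ j.2) :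
    (statusFS (revDual L)).1 ≤ (statusFS (revDual L)).2 ∧
    ∀ a b : ℝ, a ≤ b → (L.foldl stepFS (a, b)).2 =
      max (b + (statusFS (revDual L)).1) (a + (statusFS (revDual L)).2) := by
  induction L with
  | nil =>
    simp [revDual, statusFS]
  | cons j L ih =>
    obtain ⟨h1, h2⟩ := ih (fun i hi => hL i (List.mem_cons_of_mem _ hi))
    obtain ⟨hr, ht⟩ := hL j List.mem_cons_self
    rw [revDual_cons, statusFS_append]
    generalize statusFS (revDual L) = s at *
    refine ⟨?_, ?_⟩
    · simp only [stepFS, dualJob]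
      have := le_max_left (s.1 + j.2) s.2
      linarith
    · intro a b hab
      rw [List.foldl_cons]
      have h3 : a + j.1 ≤ max (a + j.1) b + j.2 := by
        have := le_max_left (a + j.1) b
        linarith
      have := h2 _ _ h3
      simp only [stepFS, dualJob] at this ⊢
      rw [this]
      grind

theorem compFS_revDual (L : List (ℝ × ℝ)) (hL : ∀ j ∈ L, 0 ≤ j.1 ∧ 0 ≤ j.2) :
    compFS (revDual L) = compFS L := by
  obtain ⟨h1, h2⟩ := foldl_eq L hL
  have := h2 0 0 le_rfl
  rw [zero_add, zero_add, max_eq_right h1] at this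
  exact this.symm

theorem flatten_revDual (LL : List (List (ℝ × ℝ))) :
    (LL.map revDual).flatten.Perm (LL.flatten.map dualJob) := by
  induction LL with
  | nil => simp
  | cons l LL ih =>
    simp only [List.map_cons, List.flatten_cons, List.map_append]
    exact (List.reverse_perm _).append ih

theorem IsSchedule.dual {m : ℕ} {L : List (ℝ × ℝ)} {S : Fin m → List (ℝ × ℝ)}
    (h : IsSchedule m L S) : IsSchedule m (L.map dualJob) (fun i => revDual (S i)) := by
  unfold IsSchedule at *
  have h1 := flatten_revDual (List.ofFn S)
  rw [List.map_ofFn] at h1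
  exact h1.trans (h.map _)

theorem makespan_dual {m : ℕ} (hm : 0 < m) {L : List (ℝ × ℝ)}
    (hL : ∀ j ∈ L, 0 ≤ j.1 ∧ 0 ≤ j.2) {S : Fin m → List (ℝ × ℝ)}
    (h : IsSchedule m L S) : makespan hm (fun i => revDual (S i)) = makespan hm S := by
  unfold makespan
  congr 1
  funext i
  apply compFS_revDual
  intro j hj
  apply hL
  apply h.subset
  exact List.mem_flatten.2 ⟨S i, List.mem_ofFn.2 ⟨i, rfl⟩, hj⟩

theorem dual_nonneg {L : List (ℝ × ℝ)} (hL : ∀ j ∈ L, 0 ≤ j.1 ∧ 0 ≤ j.2) :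
    ∀ j ∈ L.map dualJob, 0 ≤ j.1 ∧ 0 ≤ j.2 := by
  intro j hj
  obtain ⟨i, hi, rfl⟩ := List.mem_map.1 hj
  exact ⟨(hL i hi).2, (hL i hi).1⟩

theorem IsSchedule.undual {m : ℕ} {L : List (ℝ × ℝ)} {S : Fin m → List (ℝ × ℝ)}
    (h : IsSchedule m (L.map dualJob) S) : IsSchedule m L (fun i => revDual (S i)) := by
  have := h.dual
  rwa [map_dual_dual] at this

/-- On `m` identical two-stage flowshops, the minimum makespan over all schedules of a job
set equals the minimum makespan over all schedules of the dual job set. Moreover, if a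
schedule `S` is optimal for the job set, then replacing the job sequence on each flowshop
by the reversed sequence of the corresponding dual jobs yields an optimal schedule for the
dual job set with the same makespan. -/
theorem stmt7 (m : ℕ) (hm : 0 < m) (L : List (ℝ × ℝ)) (hL : ∀ j ∈ L, 0 ≤ j.1 ∧ 0 ≤ j.2) :
    sInf {c : ℝ | ∃ S : Fin m → List (ℝ × ℝ), IsSchedule m L S ∧ makespan hm S = c} =
      sInf {c : ℝ | ∃ S : Fin m → List (ℝ × ℝ),
        IsSchedule m (L.map dualJob) S ∧ makespan hm S = c} ∧
    ∀ S : Fin m → List (ℝ × ℝ), IsSchedule m L S →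
      (∀ S' : Fin m → List (ℝ × ℝ), IsSchedule m L S' → makespan hm S ≤ makespan hm S') →
      IsSchedule m (L.map dualJob) (fun h => ((S h).map dualJob).reverse) ∧
      makespan hm (fun h => ((S h).map dualJob).reverse) = makespan hm S ∧
      ∀ S' : Fin m → List (ℝ × ℝ), IsSchedule m (L.map dualJob) S' →
        makespan hm (fun h => ((S h).map dualJob).reverse) ≤ makespan hm S' := by
  refine ⟨?_, ?_⟩
  · congr 1
    ext c
    constructor
    · rintro ⟨S, hS, rfl⟩
      exact ⟨_, hS.dual, makespan_dual hm hL hS⟩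
    · rintro ⟨S, hS, rfl⟩
      exact ⟨_, hS.undual, makespan_dual hm (dual_nonneg hL) hS⟩
  · intro S hS hopt
    refine ⟨hS.dual, makespan_dual hm hL hS, ?_⟩
    intro S' hS'
    have h1 := makespan_dual hm hL hS
    have h2 := makespan_dual hm (dual_nonneg hL) hS'
    have h3 := hopt _ hS'.undual
    exact (h1.le.trans h3).trans h2.le
end

section
/- Let S_k = ⟨J_1,...,J_k⟩ be a sequence of two-stage jobs on a single two-stage flowshop, where J_i = (r_i,t_i) with r_i,t_i ≥ 0, and let S_k' = ⟨J_1',...,J_k'⟩ be obtained by replacing each job J_i = (r_i,t_i) with J_i' = (r_i + 1, t_i + 1). Then the completion time of S_k' is at most the completion time of S_k plus k + 1: C(S_k') ≤ C(S_k) + k + 1. -/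
/-- Invariant comparing the two runs from arbitrary starting statuses. -/
theorem fold_bound (L : List (ℝ × ℝ)) : ∀ (s s' : ℝ × ℝ) (c : ℝ),
    s'.1 ≤ s.1 + c → s'.2 ≤ s.2 + c + 1 →
    ((L.map fun j => (j.1 + 1, j.2 + 1)).foldl stepFS s').2 ≤
      (L.foldl stepFS s).2 + c + (L.length : ℝ) + 1 := by
  induction L with
  | nil => intro s s' c h1 h2; simp; linarith
  | cons j L ih =>
    intro s s' c h1 h2
    have h := ih (stepFS s j) (stepFS s' (j.1 + 1, j.2 + 1)) (c + 1)
      (by simp only [stepFS]; linarith)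
      (by
        simp only [stepFS]
        have a := le_max_left (s.1 + j.1) s.2
        have b := le_max_right (s.1 + j.1) s.2
        have : max (s'.1 + (j.1 + 1)) s'.2 ≤ max (s.1 + j.1) s.2 + c + 1 :=
          max_le (by linarith) (by linarith)
        linarith)
    simp only [List.map_cons, List.foldl_cons, List.length_cons, Nat.cast_add, Nat.cast_one]
    linarith

/-- If every job `(r_i, t_i)` in a sequence of `k` two-stage jobs is replaced by
`(r_i + 1, t_i + 1)`, then the completion time of the resulting sequence on a single
two-stage flowshop is at most the original completion time plus `k + 1`. -/
theorem stmt13 (L : List (ℝ × ℝ)) (hL : ∀ j ∈ L, 0 ≤ j.1 ∧ 0 ≤ j.2) :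
    compFS (L.map fun j => (j.1 + 1, j.2 + 1)) ≤ compFS L + (L.length : ℝ) + 1 := by
  have h := fold_bound L (0, 0) (0, 0) 0 (by simp) (by simp)
  simp only [compFS, statusFS]
  linarith
end

section
/- Let m ≥ 2, let G = {J_1,...,J_n} with J_i = (r_i,t_i), r_i,t_i ≥ 0 real, and let K > 0. Define the rounded job set G' = {J_1',...,J_n'} with J_i' = (⌊r_i/K⌋, ⌊t_i/K⌋). Let S' be a schedule of G' on m two-stage flowshops achieving the minimum makespan for G', given by a job index partition (P_1,...,P_m) with a job order on each part, and let S be the schedule of G on m flowshops that uses the same job index partition and the same job orders. Then the makespan of S satisfies C_max(S) ≤ Opt(G) + Kn, where Opt(G) is the minimum makespan of G on m flowshops. -/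
/-- A job index partition with a job order on each part: `P` assigns to each of the `m`
flowshops an ordered list of job indices, such that all together exactly the `n` job
indices `0, …, n − 1` occur. -/
def IsIdxSchedule (m n : ℕ) (P : Fin m → List ℕ) : Prop :=
  (List.ofFn P).flatten.Perm (List.range n)

/-- The makespan of an index schedule `P` on `m ≥ 1` flowshops for the jobs `f 0, f 1, …`:
the maximum over the flowshops of the completion time of the job sequence assigned to it. -/
noncomputable def idxMakespan {m : ℕ} (hm : 0 < m) (P : Fin m → List ℕ) (f : ℕ → ℝ × ℝ) : ℝ :=
  Finset.univ.sup' ⟨⟨0, hm⟩, Finset.mem_univ _⟩ fun h => compFS ((P h).map f)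


def RR (a : ℕ → ℝ) (L : List ℕ) : ℝ := (L.map a).sum

def cc (a b : ℕ → ℝ) : List ℕ → ℝ
  | [] => 0
  | i :: l => max (a i + b i + RR b l) (a i + cc a b l)

lemma RR_nil (a : ℕ → ℝ) : RR a [] = 0 := rfl
lemma RR_cons (a : ℕ → ℝ) (i : ℕ) (l : List ℕ) : RR a (i :: l) = a i + RR a l := by simp [RR]
lemma RR_append (a : ℕ → ℝ) (l k : List ℕ) : RR a (l ++ k) = RR a l + RR a k := by simp [RR]
lemma RR_nonneg (a : ℕ → ℝ) (ha : ∀ i, 0 ≤ a i) (l : List ℕ) : 0 ≤ RR a l := by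
  induction l with
  | nil => simp [RR]
  | cons i l ih => rw [RR_cons]; linarith [ha i]

lemma foldl_cc (a b : ℕ → ℝ) (hb : ∀ i, 0 ≤ b i) (L : List ℕ) : ∀ p q : ℝ, p ≤ q →
    ((L.map fun i => (a i, b i)).foldl stepFS (p, q)).2 = max (p + cc a b L) (q + RR b L) := by
  induction L with
  | nil => intro p q h; simp [cc, RR, h]
  | cons i l ih =>
    intro p q h
    have := hb i
    simp only [List.map_cons, List.foldl_cons, stepFS]
    rw [ih _ _ (by have := le_max_left (p + a i) q; linarith), cc, RR_cons]
    grind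

lemma RRb_le_cc (a b : ℕ → ℝ) (ha : ∀ i, 0 ≤ a i) (l : List ℕ) : RR b l ≤ cc a b l := by
  cases l with
  | nil => simp [RR, cc]
  | cons i l => rw [RR_cons, cc]; exact le_max_of_le_left (by linarith [ha i])

lemma RRa_le_cc (a b : ℕ → ℝ) (hb : ∀ i, 0 ≤ b i) (l : List ℕ) : RR a l ≤ cc a b l := by
  induction l with
  | nil => simp [RR, cc]
  | cons i l ih => rw [RR_cons, cc]; exact le_max_of_le_right (by linarith)

lemma cc_le (a b : ℕ → ℝ) (ha : ∀ i, 0 ≤ a i) (hb : ∀ i, 0 ≤ b i) (l : List ℕ) :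
    cc a b l ≤ RR a l + RR b l := by
  induction l with
  | nil => simp [RR, cc]
  | cons i l ih =>
    rw [RR_cons, RR_cons, cc]
    have := RR_nonneg a ha l
    exact max_le (by linarith) (by linarith [hb i])

lemma compFS_eq (a b : ℕ → ℝ) (ha : ∀ i, 0 ≤ a i) (hb : ∀ i, 0 ≤ b i) (L : List ℕ) :
    compFS (L.map fun i => (a i, b i)) = cc a b L := by
  unfold compFS statusFS
  rw [foldl_cc a b hb L 0 0 le_rfl]
  simpa using RRb_le_cc a b ha L

lemma cc_append (a b : ℕ → ℝ) (ha : ∀ i, 0 ≤ a i) (U V : List ℕ) :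
    cc a b (U ++ V) = max (cc a b U + RR b V) (RR a U + cc a b V) := by
  induction U with
  | nil => simpa [RR_nil, cc] using RRb_le_cc a b ha V
  | cons i l ih =>
    simp only [List.cons_append, cc, ih, RR_append, RR_cons]
    grind

lemma cc_single (a b : ℕ → ℝ) (x : ℕ) (hb : ∀ i, 0 ≤ b i) : cc a b [x] = a x + b x := by
  simp [cc, RR, hb]

/-- first prefix reaching level `A` -/
lemma exists_cross (F : List ℕ → ℝ) (A : ℝ) (h0 : F [] < A) (L : List ℕ) : A ≤ F L →
    ∃ U x V, L = U ++ x :: V ∧ F U < A ∧ A ≤ F (U ++ [x]) := by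
  induction L using List.reverseRecOn with
  | nil => intro h; linarith
  | append_singleton l y ih =>
    intro h
    by_cases hl : A ≤ F l
    · obtain ⟨U, x, V, rfl, h1, h2⟩ := ih hl
      exact ⟨U, x, V ++ [y], by simp, h1, h2⟩
    · exact ⟨l, y, [], rfl, not_le.mp hl, h⟩

lemma claim (a b : ℕ → ℝ) (ha : ∀ i, 0 ≤ a i) (hb : ∀ i, 0 ≤ b i) (L : List ℕ) (hL : L ≠ [])
    (hs : ∀ L1 L2 : List ℕ, (L1 ++ L2).Perm L → cc a b L ≤ cc a b L1 ∨ cc a b L ≤ cc a b L2) :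
    ∃ j ∈ L, cc a b L ≤ a j + b j := by
  by_contra! hc
  obtain ⟨A, hA⟩ : ∃ A, A = cc a b L := ⟨_, rfl⟩
  rw [← hA] at hc hs
  have hpos : 0 < A := by
    obtain ⟨j, hj⟩ := List.exists_mem_of_ne_nil L hL
    linarith [hc j hj, ha j, hb j]
  obtain ⟨U, x, V, rfl, h1, h2⟩ := exists_cross (cc a b) A (by simpa [cc] using hpos) L hA.le
  have hx := hc x (by simp)
  have e1 := cc_append a b ha U (x :: V)
  have e2 := cc_append a b ha (U ++ [x]) V
  rw [← hA] at e1
  rw [List.append_assoc, List.singleton_append, ← hA] at e2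
  have h3 : A ≤ cc a b (x :: V) := by
    rcases hs U (x :: V) (List.Perm.refl _) with h | h
    · linarith
    · exact h
  have nRU := RR_nonneg a ha U
  have nTV := RR_nonneg b hb V
  have RU : RR a U = 0 := by
    have := le_max_right (cc a b U + RR b (x :: V)) (RR a U + cc a b (x :: V))
    linarith
  have TV : RR b V = 0 := by
    have := le_max_left (cc a b (U ++ [x]) + RR b V) (RR a (U ++ [x]) + cc a b V)
    linarith
  have TU : cc a b U + b x ≤ A := by
    have := le_max_left (cc a b U + RR b (x :: V)) (RR a U + cc a b (x :: V))
    rw [RR_cons] at this e1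
    linarith
  have h4 : A ≤ cc a b U + b x := by
    rw [cc_append a b ha, cc_single a b x hb] at h2
    simp only [RR_cons, RR_nil] at h2
    rcases le_max_iff.mp h2 with h | h <;> linarith
  have hbx : 0 < b x := by linarith
  have h5 : A ≤ cc a b V := by
    have hp : ((U ++ V) ++ [x]).Perm (U ++ x :: V) := by
      rw [List.append_assoc]
      exact List.Perm.append_left U (List.perm_append_singleton x V)
    rcases hs _ _ hp with h | h
    · rw [cc_append a b ha] at h
      rcases le_max_iff.mp h with h | h <;> linarith
    · rw [cc_single a b x hb] at h; linarith
  have cV := cc_le a b ha hb V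
  have rL := RRa_le_cc a b hb (U ++ x :: V)
  rw [← hA, RR_append, RR_cons] at rL
  have hax := ha x
  have hax0 : a x = 0 := by linarith
  obtain ⟨V1, y, V2, rfl, g1, g2⟩ := exists_cross (cc a b) A (by simpa [cc] using hpos) V h5
  have hy := hc y (by simp)
  have g3 := cc_le a b ha hb (V1 ++ [y])
  have nT1 := RR_nonneg b hb V1
  have nT2 := RR_nonneg b hb V2
  have hby := hb y
  simp only [RR_append, RR_cons, RR_nil] at g3 TV rL
  have hp : ((U ++ V1) ++ (x :: y :: V2)).Perm (U ++ x :: (V1 ++ y :: V2)) := by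
    rw [List.append_assoc]
    exact List.Perm.append_left U List.perm_middle
  rcases hs _ _ hp with h | h
  · rw [cc_append a b ha] at h
    rcases le_max_iff.mp h with h | h <;> linarith
  · have g4 := cc_le a b ha hb (y :: V2)
    rw [cc] at h
    simp only [RR_cons] at h g4
    rcases le_max_iff.mp h with h | h <;> linarith

lemma RR_mono (a a' : ℕ → ℝ) (h : ∀ i, a i ≤ a' i) (l : List ℕ) : RR a l ≤ RR a' l := by
  induction l with
  | nil => simp [RR]
  | cons i l ih => rw [RR_cons, RR_cons]; linarith [h i]

lemma cc_mono (a b a' b' : ℕ → ℝ) (h : ∀ i, a i ≤ a' i) (h' : ∀ i, b i ≤ b' i) (l : List ℕ) :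
    cc a b l ≤ cc a' b' l := by
  induction l with
  | nil => simp [cc]
  | cons i l ih =>
    simp only [cc]
    exact max_le_max (by linarith [h i, h' i, RR_mono b b' h' l]) (by linarith [h i])

lemma RR_add (a a' : ℕ → ℝ) (K : ℝ) (h : ∀ i, a' i ≤ a i + K) (l : List ℕ) :
    RR a' l ≤ RR a l + K * l.length := by
  induction l with
  | nil => simp [RR]
  | cons i l ih => rw [RR_cons, RR_cons]; push_cast [List.length_cons]; linarith [h i]

lemma cc_add (a b a' b' : ℕ → ℝ) (K : ℝ) (hK : 0 ≤ K) (h : ∀ i, a' i ≤ a i + K)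
    (h' : ∀ i, b' i ≤ b i + K) (l : List ℕ) :
    cc a' b' l ≤ cc a b l + K * (l.length + 1) := by
  induction l with
  | nil => simp [cc, hK]
  | cons i l ih =>
    simp only [cc]
    push_cast [List.length_cons]
    have h1 := RR_add b b' K h' l
    have m1 := le_max_left (a i + b i + RR b l) (a i + cc a b l)
    have m2 := le_max_right (a i + b i + RR b l) (a i + cc a b l)
    exact max_le (by linarith [h i, h' i]) (by linarith [h i])

lemma RR_smul (a : ℕ → ℝ) (K : ℝ) (l : List ℕ) : RR (fun i => K * a i) l = K * RR a l := by
  induction l with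
  | nil => simp [RR]
  | cons i l ih => rw [RR_cons, RR_cons, ih]; ring

lemma cc_smul (a b : ℕ → ℝ) (K : ℝ) (hK : 0 ≤ K) (l : List ℕ) :
    cc (fun i => K * a i) (fun i => K * b i) l = K * cc a b l := by
  induction l with
  | nil => simp [cc]
  | cons i l ih =>
    simp only [cc, ih, RR_smul]
    rw [mul_max_of_nonneg _ _ hK]
    ring_nf

lemma job_le_cc (a b : ℕ → ℝ) (ha : ∀ i, 0 ≤ a i) (hb : ∀ i, 0 ≤ b i) (L : List ℕ) (j : ℕ)
    (hj : j ∈ L) : a j + b j ≤ cc a b L := by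
  obtain ⟨U, V, rfl⟩ := List.append_of_mem hj
  rw [cc_append a b ha, cc]
  have := RR_nonneg a ha U
  have := RR_nonneg b hb V
  exact le_max_of_le_right (by
    have := le_max_left (a j + b j + RR b V) (a j + cc a b V)
    linarith)

/-- refined rounding bound using a job dominating the rounded completion time -/
lemma cc_refined (a b a' b' : ℕ → ℝ) (K : ℝ) (hK : 0 ≤ K) (ha : ∀ i, 0 ≤ a i)
    (l1 : ∀ i, a i ≤ a' i) (l2 : ∀ i, b i ≤ b' i)
    (h : ∀ i, a' i ≤ a i + K) (h' : ∀ i, b' i ≤ b i + K) (L : List ℕ) (j : ℕ) (hj : j ∈ L)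
    (hA : cc a b L ≤ a j + b j) : cc a' b' L ≤ a' j + b' j + K * L.length := by
  obtain ⟨U, V, rfl⟩ := List.append_of_mem hj
  rw [cc_append a b ha, cc, RR_cons] at hA
  rw [cc_append a' b' (fun i => (ha i).trans (l1 i)), cc, RR_cons]
  push_cast [List.length_append, List.length_cons]
  have m1 := le_max_left (a j + b j + RR b V) (a j + cc a b V)
  have m2 := le_max_right (a j + b j + RR b V) (a j + cc a b V)
  obtain ⟨x1, x2⟩ := max_le_iff.mp hA
  have c1 := cc_add a b a' b' K hK h h' U
  have c2 := cc_add a b a' b' K hK h h' V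
  have c3 := RR_add a a' K h U
  have c4 := RR_add b b' K h' V
  have := l1 j
  have := l2 j
  refine max_le (by linarith) ?_
  rw [← max_add_add_left]
  exact max_le (by linarith) (by linarith)

lemma mem_lt {m n : ℕ} {Q : Fin m → List ℕ} (hQ : IsIdxSchedule m n Q) (h : Fin m) (i : ℕ)
    (hi : i ∈ Q h) : i < n := by
  have : i ∈ (List.ofFn Q).flatten :=
    List.mem_flatten.mpr ⟨Q h, (List.mem_ofFn' _ _).mpr ⟨h, rfl⟩, hi⟩
  exact List.mem_range.mp (hQ.mem_iff.mp this)

lemma split_sched (m n : ℕ) (L1 L2 : List ℕ) (h : (L1 ++ L2).Perm (List.range n)) :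
    IsIdxSchedule (m + 2) n (fun i => if i.val = 0 then L1 else if i.val = 1 then L2 else []) := by
  unfold IsIdxSchedule
  simpa [List.ofFn_succ] using h

lemma part_sublist {m n : ℕ} {Q : Fin m → List ℕ} (h : Fin m) :
    (Q h).Sublist (List.ofFn Q).flatten :=
  List.sublist_flatten_of_mem ((List.mem_ofFn' _ _).mpr ⟨h, rfl⟩)

/-- Let `m ≥ 2`, let `G` consist of jobs `(r_i, t_i)`, `i < n`, with nonnegative times,
let `K > 0`, and let `G'` consist of the rounded jobs `(⌊r_i/K⌋, ⌊t_i/K⌋)`. If `P` is a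
schedule (job index partition together with a job order on each part) achieving the
minimum makespan for `G'` on `m` two-stage flowshops, then the schedule of `G` using the
same partition and orders has makespan at most `Opt(G) + K·n`, where `Opt(G)` is the
minimum makespan of `G` on `m` flowshops. -/
theorem stmt17 (m : ℕ) (hm : 2 ≤ m) (n : ℕ) (r t : ℕ → ℝ)
    (hr : ∀ i, i < n → 0 ≤ r i) (ht : ∀ i, i < n → 0 ≤ t i)
    (K : ℝ) (hK : 0 < K)
    (P : Fin m → List ℕ) (hP : IsIdxSchedule m n P)
    (hPopt : ∀ Q : Fin m → List ℕ, IsIdxSchedule m n Q →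
      idxMakespan (by omega) P (fun i => ((⌊r i / K⌋ : ℝ), (⌊t i / K⌋ : ℝ))) ≤
        idxMakespan (by omega) Q (fun i => ((⌊r i / K⌋ : ℝ), (⌊t i / K⌋ : ℝ)))) :
    idxMakespan (by omega : 0 < m) P (fun i => (r i, t i)) ≤
      sInf {c : ℝ | ∃ Q : Fin m → List ℕ, IsIdxSchedule m n Q ∧
        idxMakespan (by omega : 0 < m) Q (fun i => (r i, t i)) = c} + K * n := by
  have hm0 : 0 < m := by omega
  let r0 : ℕ → ℝ := fun i => max (r i) 0
  let t0 : ℕ → ℝ := fun i => max (t i) 0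
  let a : ℕ → ℝ := fun i => (⌊r0 i / K⌋ : ℝ)
  let b : ℕ → ℝ := fun i => (⌊t0 i / K⌋ : ℝ)
  have hr0 : ∀ i, 0 ≤ r0 i := fun i => le_max_right _ _
  have ht0 : ∀ i, 0 ≤ t0 i := fun i => le_max_right _ _
  have ha : ∀ i, 0 ≤ a i := fun i => by
    have : 0 ≤ ⌊r0 i / K⌋ := Int.floor_nonneg.mpr (div_nonneg (hr0 i) hK.le)
    exact Int.cast_nonneg this
  have hb : ∀ i, 0 ≤ b i := fun i => by
    have : 0 ≤ ⌊t0 i / K⌋ := Int.floor_nonneg.mpr (div_nonneg (ht0 i) hK.le)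
    exact Int.cast_nonneg this
  have fl : ∀ z : ℝ, K * (⌊z / K⌋ : ℝ) ≤ z := fun z => by
    have := Int.floor_le (z / K)
    rw [le_div_iff₀ hK] at this
    linarith
  have fu : ∀ z : ℝ, z ≤ K * (⌊z / K⌋ : ℝ) + K := fun z => by
    have := (Int.lt_floor_add_one (z / K)).le
    rw [div_le_iff₀ hK] at this
    linarith
  -- translate completion times
  have er : ∀ i, i < n → r i = r0 i := fun i hi => (max_eq_left (hr i hi)).symm
  have et : ∀ i, i < n → t i = t0 i := fun i hi => (max_eq_left (ht i hi)).symm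
  have T1 : ∀ L : List ℕ, (∀ i ∈ L, i < n) →
      compFS (L.map fun i => (r i, t i)) = cc r0 t0 L := fun L hL => by
    rw [← compFS_eq r0 t0 hr0 ht0]
    congr 1
    exact List.map_congr_left fun i hi => by rw [er i (hL i hi), et i (hL i hi)]
  have T2 : ∀ L : List ℕ, (∀ i ∈ L, i < n) →
      compFS (L.map fun i => ((⌊r i / K⌋ : ℝ), (⌊t i / K⌋ : ℝ))) = cc a b L := fun L hL => by
    rw [← compFS_eq a b ha hb]
    congr 1
    exact List.map_congr_left fun i hi => by simp only [a, b, er i (hL i hi), et i (hL i hi)]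
  have ccs : ∀ L, K * cc a b L ≤ cc r0 t0 L := fun L => by
    rw [← cc_smul a b K hK.le]
    exact cc_mono _ _ _ _ (fun i => fl _) (fun i => fl _) L
  -- every schedule has a flowshop at least as slow as each part of `P`
  have opt : ∀ h : Fin m, ∀ Q : Fin m → List ℕ, IsIdxSchedule m n Q →
      ∃ i, cc a b (P h) ≤ cc a b (Q i) := fun h Q hQ => by
    have h1 := hPopt Q hQ
    unfold idxMakespan at h1
    have h2 := (Finset.sup'_le_iff _ _).mp h1 h (Finset.mem_univ _)
    obtain ⟨i, -, hi⟩ := (Finset.le_sup'_iff _).mp h2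
    refine ⟨i, ?_⟩
    rwa [T2 _ (fun j hj => mem_lt hP _ _ hj), T2 _ (fun j hj => mem_lt hQ _ _ hj)] at hi
  rw [← sub_le_iff_le_add]
  refine le_csInf ⟨_, P, hP, rfl⟩ ?_
  rintro c ⟨Q, hQ, rfl⟩
  rw [sub_le_iff_le_add]
  have hge : ∀ i, cc r0 t0 (Q i) ≤ idxMakespan hm0 Q (fun i => (r i, t i)) := fun i => by
    rw [← T1 _ (fun j hj => mem_lt hQ _ _ hj)]
    exact Finset.le_sup' (fun h => compFS ((Q h).map fun i => (r i, t i))) (Finset.mem_univ i)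
  refine Finset.sup'_le _ _ fun h _ => ?_
  rw [T1 _ (fun j hj => mem_lt hP _ _ hj)]
  have hlen : (P h).length ≤ n := by
    have := (part_sublist (n := n) (Q := P) h).length_le
    rwa [hP.length_eq, List.length_range] at this
  rcases hlen.lt_or_eq with hlt | heq
  · obtain ⟨i, hi⟩ := opt h Q hQ
    have h1 := cc_add (fun i => K * a i) (fun i => K * b i) r0 t0 K hK.le
      (fun i => fu _) (fun i => fu _) (P h)
    rw [cc_smul a b K hK.le] at h1
    have h2 := mul_le_mul_of_nonneg_left hi hK.le
    have h3 : ((P h).length : ℝ) + 1 ≤ n := by exact_mod_cast hlt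
    have h4 := mul_le_mul_of_nonneg_left h3 hK.le
    linarith [ccs (Q i), hge i]
  · have hperm : (P h).Perm (List.range n) := by
      have := (part_sublist (n := n) (Q := P) h).eq_of_length
        (by rw [hP.length_eq, List.length_range, heq])
      rw [this]; exact hP
    by_cases hnil : P h = []
    · rw [hnil] at heq ⊢
      have h1 := hge ⟨0, hm0⟩
      have h2 := RRa_le_cc r0 t0 ht0 (Q ⟨0, hm0⟩)
      have h3 := RR_nonneg r0 hr0 (Q ⟨0, hm0⟩)
      have h4 : 0 ≤ K * (n : ℝ) := by positivity
      simp only [cc]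
      linarith
    obtain ⟨j, hj, hjA⟩ := claim a b ha hb (P h) hnil (by
      intro L1 L2 h12
      obtain ⟨m', rfl⟩ : ∃ m', m = m' + 2 := ⟨m - 2, by omega⟩
      obtain ⟨i, hi⟩ := opt h _ (split_sched m' n L1 L2 (h12.trans hperm))
      have nn : 0 ≤ cc a b L1 := (RR_nonneg a ha L1).trans (RRa_le_cc a b hb L1)
      split_ifs at hi
      · exact Or.inl hi
      · exact Or.inr hi
      · exact Or.inl (hi.trans nn))
    have h1 := cc_refined (fun i => K * a i) (fun i => K * b i) r0 t0 K hK.le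
      (fun i => mul_nonneg hK.le (ha i)) (fun i => fl _) (fun i => fl _)
      (fun i => fu _) (fun i => fu _) (P h) j hj (by
        rw [cc_smul a b K hK.le]
        have := mul_le_mul_of_nonneg_left hjA hK.le
        linarith)
    rw [heq] at h1
    have hjQ : j ∈ (List.ofFn Q).flatten := hQ.mem_iff.mpr (hperm.mem_iff.mp hj)
    obtain ⟨l, hl, hjl⟩ := List.mem_flatten.mp hjQ
    obtain ⟨i, rfl⟩ := (List.mem_ofFn' _ _).mp hl
    linarith [hge i, job_le_cc r0 t0 hr0 ht0 (Q i) j hjl]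
end

section
/- Let m ≥ 2, let G = {J_1,...,J_n} with J_i = (r_i,t_i), r_i,t_i ≥ 0 real and not all zero, let ε > 0, let T_max = max{Σ_{i=1}^n r_i, Σ_{i=1}^n t_i}, and set K = ε·T_max/(nm). Define G' = {(⌊r_i/K⌋, ⌊t_i/K⌋) : 1 ≤ i ≤ n}. Let S' be a schedule of G' on m two-stage flowshops achieving the minimum makespan for G', given by a job index partition (P_1,...,P_m) with a job order on each part, and let S be the schedule of G using the same partition and orders. Then C_max(S) ≤ (1 + ε)·Opt(G), where Opt(G) is the minimum makespan of G on m flowshops. -/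
namespace FS

/-- completion time of an index list -/
noncomputable def C (f : ℕ → ℝ × ℝ) (L : List ℕ) : ℝ := compFS (L.map f)
/-- total R-time -/
noncomputable def R (f : ℕ → ℝ × ℝ) (L : List ℕ) : ℝ := (L.map fun i => (f i).1).sum
/-- total T-time -/
noncomputable def T (f : ℕ → ℝ × ℝ) (L : List ℕ) : ℝ := (L.map fun i => (f i).2).sum
/-- nonnegativity on a list -/
def NN (f : ℕ → ℝ × ℝ) (L : List ℕ) : Prop := ∀ i ∈ L, 0 ≤ (f i).1 ∧ 0 ≤ (f i).2

lemma C_nil (f : ℕ → ℝ × ℝ) : C f [] = 0 := by simp [C, compFS, statusFS]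
lemma R_nil (f : ℕ → ℝ × ℝ) : R f [] = 0 := by simp [R]
lemma T_nil (f : ℕ → ℝ × ℝ) : T f [] = 0 := by simp [T]
lemma R_cons (f : ℕ → ℝ × ℝ) (j : ℕ) (L : List ℕ) : R f (j :: L) = (f j).1 + R f L := by simp [R]
lemma T_cons (f : ℕ → ℝ × ℝ) (j : ℕ) (L : List ℕ) : T f (j :: L) = (f j).2 + T f L := by simp [T]
lemma R_append (f : ℕ → ℝ × ℝ) (A B : List ℕ) : R f (A ++ B) = R f A + R f B := by simp [R]
lemma T_append (f : ℕ → ℝ × ℝ) (A B : List ℕ) : T f (A ++ B) = T f A + T f B := by simp [T]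

lemma NN_cons {f : ℕ → ℝ × ℝ} {j : ℕ} {L : List ℕ} (h : NN f (j :: L)) :
    (0 ≤ (f j).1 ∧ 0 ≤ (f j).2) ∧ NN f L :=
  ⟨h j (by simp), fun i hi => h i (by simp [hi])⟩

lemma R_nonneg {f : ℕ → ℝ × ℝ} {L : List ℕ} (h : NN f L) : 0 ≤ R f L := by
  apply List.sum_nonneg
  intro x hx
  obtain ⟨i, hi, rfl⟩ := List.mem_map.1 hx
  exact (h i hi).1

lemma T_nonneg {f : ℕ → ℝ × ℝ} {L : List ℕ} (h : NN f L) : 0 ≤ T f L := by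
  apply List.sum_nonneg
  intro x hx
  obtain ⟨i, hi, rfl⟩ := List.mem_map.1 hx
  exact (h i hi).2

lemma fold_aux (f : ℕ → ℝ × ℝ) (L : List ℕ) (h : NN f L) : ∀ a b : ℝ, a ≤ b →
    ((L.map f).foldl stepFS (a, b)).2 = max (a + C f L) (b + T f L) := by
  induction L with
  | nil => intro a b hab; simp [C_nil, T_nil, hab]
  | cons j L ih =>
    intro a b hab
    obtain ⟨⟨h1, h2⟩, hL⟩ := NN_cons h
    have key : ∀ a b : ℝ, a ≤ b → (((j :: L).map f).foldl stepFS (a, b)).2 =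
        max (a + (f j).1 + C f L) (max (a + (f j).1) b + (f j).2 + T f L) := by
      intro a b hab
      simp only [List.map_cons, List.foldl_cons]
      rw [← ih hL _ _ (by have := le_max_left (a + (f j).1) b; linarith)]
      rfl
    have hC : C f (j :: L) = _ := key 0 0 le_rfl
    rw [key a b hab, hC, T_cons]
    simp only [max_def]
    split_ifs <;> linarith

lemma C_cons (f : ℕ → ℝ × ℝ) (j : ℕ) (L : List ℕ) (h : NN f (j :: L)) :
    C f (j :: L) = max ((f j).1 + C f L) ((f j).1 + (f j).2 + T f L) := by
  obtain ⟨⟨h1, h2⟩, hL⟩ := NN_cons h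
  have : C f (j :: L) = ((L.map f).foldl stepFS ((f j).1, (f j).1 + (f j).2)).2 := by
    simp [C, compFS, statusFS, stepFS, h1]
  rw [this, fold_aux f L hL _ _ (by linarith)]

lemma NN_append {f : ℕ → ℝ × ℝ} {A B : List ℕ} (h : NN f (A ++ B)) : NN f A ∧ NN f B :=
  ⟨fun i hi => h i (by simp [hi]), fun i hi => h i (by simp [hi])⟩

lemma T_le_C {f : ℕ → ℝ × ℝ} {L : List ℕ} (h : NN f L) : T f L ≤ C f L := by
  cases L with
  | nil => simp [C_nil, T_nil]
  | cons j L =>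
    obtain ⟨⟨h1, h2⟩, hL⟩ := NN_cons h
    rw [C_cons f j L h, T_cons]
    exact le_max_of_le_right (by linarith)

lemma R_le_C {f : ℕ → ℝ × ℝ} {L : List ℕ} (h : NN f L) : R f L ≤ C f L := by
  induction L with
  | nil => simp [C_nil, R_nil]
  | cons j L ih =>
    obtain ⟨⟨h1, h2⟩, hL⟩ := NN_cons h
    rw [C_cons f j L h, R_cons]
    exact le_max_of_le_left (by linarith [ih hL])

lemma C_nonneg {f : ℕ → ℝ × ℝ} {L : List ℕ} (h : NN f L) : 0 ≤ C f L :=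
  (T_nonneg h).trans (T_le_C h)

lemma C_append (f : ℕ → ℝ × ℝ) (A B : List ℕ) (h : NN f (A ++ B)) :
    C f (A ++ B) = max (C f A + T f B) (R f A + C f B) := by
  induction A with
  | nil =>
    simp only [List.nil_append] at h
    simp [C_nil, R_nil, T_le_C h]
  | cons j A ih =>
    have h' : NN f (j :: (A ++ B)) := h
    have hA : NN f (j :: A) := (NN_append h).1
    rw [List.cons_append, C_cons _ _ _ h', C_cons _ _ _ hA, ih (NN_cons h').2, R_cons, T_append]
    simp only [max_def]
    split_ifs <;> linarith

lemma C_mid (f : ℕ → ℝ × ℝ) (A B : List ℕ) (j : ℕ) (h : NN f (A ++ j :: B)) :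
    C f (A ++ j :: B) = max (C f A + ((f j).2 + T f B))
      (max (R f A + (f j).1 + C f B) (R f A + (f j).1 + (f j).2 + T f B)) := by
  rw [C_append _ _ _ h, C_cons _ _ _ (NN_append h).2, T_cons, ← max_add_add_left]
  congr 2 <;> ring

lemma single_le_C {f : ℕ → ℝ × ℝ} {L : List ℕ} (h : NN f L) {j : ℕ} (hj : j ∈ L) :
    (f j).1 + (f j).2 ≤ C f L := by
  obtain ⟨A, B, rfl⟩ := List.append_of_mem hj
  rw [C_mid _ _ _ _ h]
  have h1 := R_nonneg (NN_append h).1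
  have h2 := T_nonneg (NN_cons (NN_append h).2).2
  exact le_max_of_le_right (le_max_of_le_right (by linarith))

section err
variable {f g : ℕ → ℝ × ℝ} {K : ℝ} {L : List ℕ}

lemma T_err (hu : ∀ i ∈ L, (f i).2 ≤ K * (g i).2 + K) : T f L ≤ K * T g L + L.length * K := by
  induction L with
  | nil => simp [T_nil]
  | cons j L ih =>
    have := ih fun i hi => hu i (by simp [hi])
    have := hu j (by simp)
    rw [T_cons, T_cons]; push_cast [List.length_cons]; linarith

lemma R_err (hu : ∀ i ∈ L, (f i).1 ≤ K * (g i).1 + K) : R f L ≤ K * R g L + L.length * K := by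
  induction L with
  | nil => simp [R_nil]
  | cons j L ih =>
    have := ih fun i hi => hu i (by simp [hi])
    have := hu j (by simp)
    rw [R_cons, R_cons]; push_cast [List.length_cons]; linarith

lemma C_err (hK : 0 < K) (hf : NN f L) (hg : NN g L)
    (h1 : ∀ i ∈ L, (f i).1 ≤ K * (g i).1 + K) (h2 : ∀ i ∈ L, (f i).2 ≤ K * (g i).2 + K) :
    C f L ≤ K * C g L + (L.length + 1) * K := by
  induction L with
  | nil => simp [C_nil, hK.le]
  | cons j L ih =>
    have e1 := ih (NN_cons hf).2 (NN_cons hg).2 (fun i hi => h1 i (by simp [hi]))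
      (fun i hi => h2 i (by simp [hi]))
    have e2 : T f L ≤ _ := T_err (g := g) (K := K) fun i hi => h2 i (by simp [hi])
    have e3 := h1 j (by simp)
    have e4 := h2 j (by simp)
    rw [C_cons _ _ _ hf, C_cons _ _ _ hg, mul_max_of_nonneg _ _ hK.le]
    push_cast [List.length_cons]
    rw [← max_add_add_right]
    exact max_le_max (by linarith) (by linarith)

lemma T_mono (h2 : ∀ i ∈ L, K * (g i).2 ≤ (f i).2) : K * T g L ≤ T f L := by
  induction L with
  | nil => simp [T_nil]
  | cons j L ih =>
    have := ih fun i hi => h2 i (by simp [hi])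
    have := h2 j (by simp)
    rw [T_cons, T_cons]; linarith

lemma C_mono (hK : 0 < K) (hf : NN f L) (hg : NN g L)
    (h1 : ∀ i ∈ L, K * (g i).1 ≤ (f i).1) (h2 : ∀ i ∈ L, K * (g i).2 ≤ (f i).2) :
    K * C g L ≤ C f L := by
  induction L with
  | nil => simp [C_nil]
  | cons j L ih =>
    have e1 := ih (NN_cons hf).2 (NN_cons hg).2 (fun i hi => h1 i (by simp [hi]))
      (fun i hi => h2 i (by simp [hi]))
    have e2 : _ ≤ T f L := T_mono (g := g) (K := K) fun i hi => h2 i (by simp [hi])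
    have e3 := h1 j (by simp)
    have e4 := h2 j (by simp)
    rw [C_cons _ _ _ hf, C_cons _ _ _ hg, mul_max_of_nonneg _ _ hK.le]
    exact max_le_max (by linarith) (by linarith)

/-- If a rounded single job dominates the rounded completion time, we save one error unit. -/
lemma C_single (hK : 0 < K) (hf : NN f L) (hg : NN g L)
    (h1 : ∀ i ∈ L, (f i).1 ≤ K * (g i).1 + K) (h2 : ∀ i ∈ L, (f i).2 ≤ K * (g i).2 + K)
    (h3 : ∀ i ∈ L, K * (g i).1 ≤ (f i).1) (h4 : ∀ i ∈ L, K * (g i).2 ≤ (f i).2)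
    {j : ℕ} (hj : j ∈ L) (hM : C g L ≤ (g j).1 + (g j).2) :
    C f L ≤ (f j).1 + (f j).2 + L.length * K := by
  obtain ⟨A, B, rfl⟩ := List.append_of_mem hj
  have fA := (NN_append hf).1
  have gA := (NN_append hg).1
  have fB := (NN_cons (NN_append hf).2).2
  have gB := (NN_cons (NN_append hg).2).2
  have a1 := C_err hK fA gA (fun i hi => h1 i (by simp [hi])) (fun i hi => h2 i (by simp [hi]))
  have b1 := C_err hK fB gB (fun i hi => h1 i (by simp [hi])) (fun i hi => h2 i (by simp [hi]))
  have a2 : R f A ≤ _ := R_err (g := g) (K := K) fun i hi => h1 i (by simp [hi])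
  have b2 : T f B ≤ _ := T_err (g := g) (K := K) fun i hi => h2 i (by simp [hi])
  have e3 := h3 j hj
  have e4 := h4 j hj
  rw [C_mid _ _ _ _ hg, max_le_iff, max_le_iff] at hM
  obtain ⟨m1, m2, m3⟩ := hM
  have m1' := mul_le_mul_of_nonneg_left (sub_nonneg.2 m1) hK.le
  have m2' := mul_le_mul_of_nonneg_left (sub_nonneg.2 m2) hK.le
  have m3' := mul_le_mul_of_nonneg_left (sub_nonneg.2 m3) hK.le
  rw [C_mid _ _ _ _ hf]
  push_cast [List.length_append, List.length_cons]
  refine max_le ?_ (max_le ?_ ?_) <;> linarith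
end err

/-- Removing a job that does not reduce the completion time. -/
lemma zero_of_remove {g : ℕ → ℝ × ℝ} {A B : List ℕ} {j : ℕ} (h : NN g (A ++ j :: B))
    (hM : C g (A ++ j :: B) ≤ C g (A ++ B)) : (g j).1 = 0 ∨ (g j).2 = 0 := by
  have hAB : NN g (A ++ B) := fun i hi => h i (by
    rcases List.mem_append.1 hi with h | h <;> simp [h])
  obtain ⟨h1, h2⟩ := h j (by simp)
  rw [C_mid _ _ _ _ h, C_append _ _ _ hAB, max_le_iff, max_le_iff] at hM
  obtain ⟨m1, m2, m3⟩ := hM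
  rcases le_total (C g A + T g B) (R g A + C g B) with hc | hc
  · rw [max_eq_right hc] at *
    left; linarith
  · rw [max_eq_left hc] at *
    right; linarith

lemma split_sum (w : ℕ → ℝ) (M : ℝ) (hM : 0 < M) (N : List ℕ)
    (hlt : ∀ i ∈ N, w i < M) (hs : (N.map w).sum ≤ M) :
    ∃ A B : List ℕ, (A ++ B).Perm N ∧ (A.map w).sum < M ∧ (B.map w).sum < M := by
  by_cases h : (N.map w).sum < M
  · exact ⟨N, [], by simp, h, by simpa using hM⟩
  · have : ∃ b ∈ N, 0 < w b := by
      by_contra! hc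
      have : (N.map w).sum ≤ 0 := by
        have := List.sum_le_sum (l := N) (f := w) (g := fun _ => (0 : ℝ)) hc
        simpa using this
      linarith
    obtain ⟨b, hb, hw⟩ := this
    refine ⟨[b], N.erase b, (List.perm_cons_erase hb).symm, by simpa using hlt b hb, ?_⟩
    have := ((List.perm_cons_erase hb).map w).sum_eq
    simp only [List.map_cons, List.sum_cons] at this
    linarith

lemma R_zero {g : ℕ → ℝ × ℝ} {L : List ℕ} (h : ∀ i ∈ L, (g i).1 = 0) : R g L = 0 := by
  apply List.sum_eq_zero
  intro x hx
  obtain ⟨i, hi, rfl⟩ := List.mem_map.1 hx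
  exact h i hi

lemma T_zero {g : ℕ → ℝ × ℝ} {L : List ℕ} (h : ∀ i ∈ L, (g i).2 = 0) : T g L = 0 := by
  apply List.sum_eq_zero
  intro x hx
  obtain ⟨i, hi, rfl⟩ := List.mem_map.1 hx
  exact h i hi

lemma C_Rzero {g : ℕ → ℝ × ℝ} {L : List ℕ} (hn : NN g L) (h : ∀ i ∈ L, (g i).1 = 0) :
    C g L = T g L := by
  induction L with
  | nil => simp [C_nil, T_nil]
  | cons j L ih =>
    have e := ih (NN_cons hn).2 (fun i hi => h i (by simp [hi]))
    have h0 := h j (by simp)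
    have := (NN_cons hn).1.2
    rw [C_cons _ _ _ hn, T_cons, e, h0]
    rw [max_eq_right (by linarith)]; ring

lemma C_Tzero {g : ℕ → ℝ × ℝ} {L : List ℕ} (hn : NN g L) (h : ∀ i ∈ L, (g i).2 = 0) :
    C g L = R g L := by
  induction L with
  | nil => simp [C_nil, R_nil]
  | cons j L ih =>
    have e := ih (NN_cons hn).2 (fun i hi => h i (by simp [hi]))
    have e2 := T_zero (fun i hi => h i (List.mem_cons_of_mem j hi))
    have h0 := h j (by simp)
    have := R_nonneg (NN_cons hn).2
    rw [C_cons _ _ _ hn, R_cons, e, h0, e2]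
    rw [max_eq_left (by linarith)]

lemma C_sep {g : ℕ → ℝ × ℝ} {Z N : List ℕ} (hn : NN g (Z ++ N)) (hZ : ∀ i ∈ Z, (g i).1 = 0)
    (hN : ∀ i ∈ N, (g i).2 = 0) : C g (Z ++ N) = max (T g Z) (R g N) := by
  rw [C_append _ _ _ hn, C_Rzero (NN_append hn).1 hZ, C_Tzero (NN_append hn).2 hN, R_zero hZ,
    T_zero hN]
  simp

/-- A list whose completion time exceeds every single job can be split into two better lists. -/
lemma exists_split {g : ℕ → ℝ × ℝ} {L : List ℕ} (hn : NN g L) (hne : L ≠ [])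
    (hM : ∀ j ∈ L, (g j).1 + (g j).2 < C g L) :
    ∃ A B : List ℕ, (A ++ B).Perm L ∧ C g A < C g L ∧ C g B < C g L := by
  by_cases hz : ∀ j ∈ L, (g j).1 = 0 ∨ (g j).2 = 0
  · classical
    obtain ⟨j0, hj0⟩ := List.exists_mem_of_ne_nil L hne
    have hpos : 0 < C g L := by
      have := hM j0 hj0; have := hn j0 hj0; linarith
    set Z := L.filter (fun i => decide ((g i).1 = 0)) with hZd
    set N := L.filter (fun i => !decide ((g i).1 = 0)) with hNd
    have hp : (Z ++ N).Perm L := List.filter_append_perm _ L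
    have hnp : NN g (Z ++ N) := fun i hi => hn i (hp.mem_iff.1 hi)
    have hZL : ∀ i ∈ Z, i ∈ L := fun i hi => List.mem_of_mem_filter hi
    have hNL : ∀ i ∈ N, i ∈ L := fun i hi => List.mem_of_mem_filter hi
    have hZ : ∀ i ∈ Z, (g i).1 = 0 := fun i hi => by
      simpa using (List.mem_filter.1 hi).2
    have hN : ∀ i ∈ N, (g i).2 = 0 := fun i hi => by
      have : (g i).1 ≠ 0 := by simpa using (List.mem_filter.1 hi).2
      exact (hz i (hNL i hi)).resolve_left this
    have hTs : T g Z ≤ C g L := by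
      have h1 : T g (Z ++ N) = T g L := (hp.map _).sum_eq
      rw [T_append] at h1
      linarith [T_nonneg (NN_append hnp).2, T_le_C hn]
    have hRs : R g N ≤ C g L := by
      have h1 : R g (Z ++ N) = R g L := (hp.map _).sum_eq
      rw [R_append] at h1
      linarith [R_nonneg (NN_append hnp).1, R_le_C hn]
    obtain ⟨Z1, Z2, hZp, hZ1, hZ2⟩ := split_sum (fun i => (g i).2) _ hpos Z
      (fun i hi => by have := hM i (hZL i hi); have := hn i (hZL i hi); linarith) hTs
    obtain ⟨N1, N2, hNp, hN1, hN2⟩ := split_sum (fun i => (g i).1) _ hpos N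
      (fun i hi => by have := hM i (hNL i hi); have := hn i (hNL i hi); linarith) hRs
    have mZ1 : ∀ i ∈ Z1, i ∈ Z := fun i hi => hZp.mem_iff.1 (by simp [hi])
    have mZ2 : ∀ i ∈ Z2, i ∈ Z := fun i hi => hZp.mem_iff.1 (by simp [hi])
    have mN1 : ∀ i ∈ N1, i ∈ N := fun i hi => hNp.mem_iff.1 (by simp [hi])
    have mN2 : ∀ i ∈ N2, i ∈ N := fun i hi => hNp.mem_iff.1 (by simp [hi])
    refine ⟨Z1 ++ N1, Z2 ++ N2, ?_, ?_, ?_⟩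
    · refine List.Perm.trans ?_ ((hZp.append hNp).trans hp)
      rw [← Multiset.coe_eq_coe]
      simp only [← Multiset.coe_add]
      abel
    · rw [C_sep (fun i hi => ?_) (fun i hi => hZ i (mZ1 i hi)) (fun i hi => hN i (mN1 i hi))]
      · exact max_lt hZ1 hN1
      · rcases List.mem_append.1 hi with h | h
        · exact hn i (hZL i (mZ1 i h))
        · exact hn i (hNL i (mN1 i h))
    · rw [C_sep (fun i hi => ?_) (fun i hi => hZ i (mZ2 i hi)) (fun i hi => hN i (mN2 i hi))]
      · exact max_lt hZ2 hN2
      · rcases List.mem_append.1 hi with h | h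
        · exact hn i (hZL i (mZ2 i h))
        · exact hn i (hNL i (mN2 i h))
  · push Not at hz
    obtain ⟨j, hj, hj1, hj2⟩ := hz
    have hMj := hM j hj
    obtain ⟨A, B, rfl⟩ := List.append_of_mem hj
    refine ⟨[j], A ++ B, ?_, ?_, ?_⟩
    · simpa using (List.perm_middle (a := j) (l₁ := A) (l₂ := B)).symm
    · rw [C_cons _ _ _ (fun i hi => by
        rw [List.mem_singleton.1 hi]; exact hn j (by simp)), C_nil, T_nil]
      have := hn j (by simp)
      exact max_lt (by linarith) (by linarith)
    · by_contra! hc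
      rcases zero_of_remove hn hc with h | h
      · exact hj1 h
      · exact hj2 h

lemma flatten_coe : ∀ {m : ℕ} (P : Fin m → List ℕ),
    (((List.ofFn P).flatten : List ℕ) : Multiset ℕ) = ∑ i, (P i : Multiset ℕ)
  | 0, P => by simp
  | m + 1, P => by
    rw [List.ofFn_succ, List.flatten_cons, ← Multiset.coe_add, flatten_coe, Fin.sum_univ_succ]

lemma sched_iff {m n : ℕ} (P : Fin m → List ℕ) :
    IsIdxSchedule m n P ↔ ∑ i, (P i : Multiset ℕ) = Multiset.range n := by
  rw [IsIdxSchedule, ← Multiset.coe_eq_coe, flatten_coe]; rfl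

lemma mem_lt {m n : ℕ} {P : Fin m → List ℕ} (h : IsIdxSchedule m n P) (k : Fin m) {i : ℕ}
    (hi : i ∈ P k) : i < n := by
  have : i ∈ (List.ofFn P).flatten :=
    List.mem_flatten.2 ⟨P k, by simp, hi⟩
  simpa using h.mem_iff.1 this

lemma exists_mem {m n : ℕ} {P : Fin m → List ℕ} (h : IsIdxSchedule m n P) {i : ℕ}
    (hi : i < n) : ∃ k, i ∈ P k := by
  have : i ∈ (List.ofFn P).flatten := h.mem_iff.2 (by simpa using hi)
  simpa using this

lemma le_mk {m : ℕ} (hm : 0 < m) (P : Fin m → List ℕ) (f : ℕ → ℝ × ℝ) (k : Fin m) :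
    C f (P k) ≤ idxMakespan hm P f :=
  Finset.le_sup' (fun h => compFS ((P h).map f)) (Finset.mem_univ k)

lemma sum_w {m n : ℕ} {P : Fin m → List ℕ} (h : IsIdxSchedule m n P) (w : ℕ → ℝ) :
    ∑ i ∈ Finset.range n, w i = ∑ k, ((P k).map w).sum := by
  have h1 := (sched_iff P).1 h
  have h2 := congrArg (fun s : Multiset ℕ => (s.map w).sum) h1
  have h3 : ∀ s : Finset (Fin m), ((∑ i ∈ s, (P i : Multiset ℕ)).map w).sum
      = ∑ k ∈ s, ((P k).map w).sum := by
    classical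
    intro s
    induction s using Finset.induction_on with
    | empty => simp
    | insert a s ha ih => rw [Finset.sum_insert ha, Finset.sum_insert ha, Multiset.map_add,
        Multiset.sum_add, ih]; simp
  simp only [h3] at h2
  rw [h2]; rfl

end FS

open FS

/-- Let `m ≥ 2`, let `G` consist of jobs `(r_i, t_i)`, `i < n`, with nonnegative times and
not all zero, let `ε > 0`, let `T_max = max{Σ r_i, Σ t_i}` and `K = ε·T_max/(n·m)`, and let
`G'` consist of the rounded jobs `(⌊r_i/K⌋, ⌊t_i/K⌋)`. If `P` is a schedule (job index
partition together with a job order on each part) achieving the minimum makespan for `G'`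
on `m` two-stage flowshops, then the schedule of `G` using the same partition and orders
has makespan at most `(1 + ε)·Opt(G)`, where `Opt(G)` is the minimum makespan of `G` on
`m` flowshops. -/
theorem stmt18 (m : ℕ) (hm : 2 ≤ m) (n : ℕ) (r t : ℕ → ℝ)
    (hr : ∀ i, i < n → 0 ≤ r i) (ht : ∀ i, i < n → 0 ≤ t i)
    (ε : ℝ) (hε : 0 < ε)
    (Tmax : ℝ) (hTmax : Tmax = max (∑ i ∈ Finset.range n, r i) (∑ i ∈ Finset.range n, t i))
    (hTpos : 0 < Tmax)
    (K : ℝ) (hKdef : K = ε * Tmax / ((n : ℝ) * (m : ℝ)))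
    (P : Fin m → List ℕ) (hP : IsIdxSchedule m n P)
    (hPopt : ∀ Q : Fin m → List ℕ, IsIdxSchedule m n Q →
      idxMakespan (by omega) P (fun i => ((⌊r i / K⌋ : ℝ), (⌊t i / K⌋ : ℝ))) ≤
        idxMakespan (by omega) Q (fun i => ((⌊r i / K⌋ : ℝ), (⌊t i / K⌋ : ℝ)))) :
    idxMakespan (by omega : 0 < m) P (fun i => (r i, t i)) ≤
      (1 + ε) * sInf {c : ℝ | ∃ Q : Fin m → List ℕ, IsIdxSchedule m n Q ∧
        idxMakespan (by omega : 0 < m) Q (fun i => (r i, t i)) = c} := by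
  have hm0 : 0 < m := by omega
  have hn0 : 0 < n := by
    rcases Nat.eq_zero_or_pos n with h | h
    · subst h; simp at hTmax; linarith
    · exact h
  have hnR : (0 : ℝ) < n := by exact_mod_cast hn0
  have hmR : (0 : ℝ) < m := by exact_mod_cast hm0
  have hK : 0 < K := by rw [hKdef]; positivity
  set f : ℕ → ℝ × ℝ := fun i => (r i, t i) with hf
  set g : ℕ → ℝ × ℝ := fun i => ((⌊r i / K⌋ : ℝ), (⌊t i / K⌋ : ℝ)) with hg
  have low : ∀ x : ℝ, K * (⌊x / K⌋ : ℝ) ≤ x := fun x => by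
    have := Int.floor_le (x / K)
    rw [le_div_iff₀ hK] at this; linarith
  have upp : ∀ x : ℝ, x ≤ K * (⌊x / K⌋ : ℝ) + K := fun x => by
    have := (Int.lt_floor_add_one (x / K)).le
    rw [div_le_iff₀ hK] at this; linarith
  have fl0 : ∀ x : ℝ, 0 ≤ x → (0 : ℝ) ≤ (⌊x / K⌋ : ℝ) := fun x hx => by
    exact_mod_cast Int.floor_nonneg.2 (by positivity)
  have NNf : ∀ Q : Fin m → List ℕ, IsIdxSchedule m n Q → ∀ k, NN f (Q k) :=
    fun Q hQ k i hi => ⟨hr i (mem_lt hQ k hi), ht i (mem_lt hQ k hi)⟩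
  have NNg : ∀ Q : Fin m → List ℕ, IsIdxSchedule m n Q → ∀ k, NN g (Q k) :=
    fun Q hQ k i hi => ⟨fl0 _ (hr i (mem_lt hQ k hi)), fl0 _ (ht i (mem_lt hQ k hi))⟩
  -- it suffices to compare with each schedule
  suffices H : ∀ Q : Fin m → List ℕ, IsIdxSchedule m n Q →
      idxMakespan hm0 P f ≤ (1 + ε) * idxMakespan hm0 Q f by
    rw [← div_le_iff₀' (by linarith)]
    refine le_csInf ⟨idxMakespan hm0 P f, P, hP, rfl⟩ ?_
    rintro c ⟨Q, hQ, rfl⟩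
    rw [div_le_iff₀' (by linarith)]
    exact H Q hQ
  intro Q hQ
  set O := idxMakespan hm0 Q f with hO
  have hO1 : ∑ i ∈ Finset.range n, r i ≤ m * O := by
    rw [sum_w hQ r]
    refine (Finset.sum_le_card_nsmul _ _ O fun k _ => ?_).trans (by simp)
    exact (R_le_C (NNf Q hQ k)).trans (le_mk hm0 Q f k)
  have hO2 : ∑ i ∈ Finset.range n, t i ≤ m * O := by
    rw [sum_w hQ t]
    refine (Finset.sum_le_card_nsmul _ _ O fun k _ => ?_).trans (by simp)
    exact (T_le_C (NNf Q hQ k)).trans (le_mk hm0 Q f k)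
  have hTO : Tmax ≤ m * O := by rw [hTmax]; exact max_le hO1 hO2
  have hnK : n * K ≤ ε * O := by
    have : n * K = ε * Tmax / m := by rw [hKdef]; field_simp
    rw [this, div_le_iff₀ hmR]
    nlinarith
  have hKM : K * idxMakespan hm0 P g ≤ O := by
    have h1 : idxMakespan hm0 Q g ≤ O / K := by
      apply Finset.sup'_le
      intro k _
      rw [le_div_iff₀' hK]
      exact (C_mono hK (NNf Q hQ k) (NNg Q hQ k) (fun i _ => low _) (fun i _ => low _)).trans
        (le_mk hm0 Q f k)
    have h2 := (hPopt Q hQ).trans h1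
    rwa [le_div_iff₀' hK] at h2
  apply Finset.sup'_le
  intro k _
  change C f (P k) ≤ _
  suffices C f (P k) ≤ O + n * K by linarith
  have hCM : K * C g (P k) ≤ O :=
    (mul_le_mul_of_nonneg_left (le_mk hm0 P g k) hK.le).trans hKM
  have herr := C_err hK (NNf P hP k) (NNg P hP k) (fun i _ => upp _) (fun i _ => upp _)
  by_cases hlen : (P k).length + 1 ≤ n
  · have : (((P k).length : ℝ) + 1) ≤ n := by exact_mod_cast hlen
    have := mul_le_mul_of_nonneg_right this hK.le
    linarith
  -- all jobs are on machine `k`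
  have hsum := (sched_iff P).1 hP
  have hle : (P k : Multiset ℕ) ≤ Multiset.range n := by
    rw [← hsum]
    exact Finset.single_le_sum (f := fun i => (P i : Multiset ℕ)) (fun i _ => Multiset.zero_le _)
      (Finset.mem_univ k)
  have heq : (P k : Multiset ℕ) = Multiset.range n :=
    Multiset.eq_of_le_of_card_le hle (by simp; omega)
  have hlenk : (P k).length = n := by
    have := congrArg Multiset.card heq
    simpa using this
  have hne : P k ≠ [] := by
    intro h; rw [h] at hlenk; simp at hlenk; omega
  by_cases hM : ∀ j ∈ P k, (g j).1 + (g j).2 < C g (P k)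
  · exfalso
    obtain ⟨A, B, hAB, hA, hB⟩ := exists_split (NNg P hP k) hne hM
    have hpos : 0 < C g (P k) := by
      obtain ⟨j0, hj0⟩ := List.exists_mem_of_ne_nil _ hne
      have := hM j0 hj0; have := NNg P hP k j0 hj0; linarith
    have : ∃ ktwo : Fin m, ktwo ≠ k := by
      have : Nontrivial (Fin m) := Fin.nontrivial_iff_two_le.2 hm
      exact exists_ne k
    obtain ⟨ktwo, hktwo⟩ := this
    let Qnew : Fin m → List ℕ := fun i => if i = k then A else if i = ktwo then B else []
    have hQone : Qnew k = A := by simp [Qnew]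
    have hQtwo : Qnew ktwo = B := by simp [Qnew, hktwo]
    have hQnew : IsIdxSchedule m n Qnew := by
      rw [sched_iff, ← heq, ← Multiset.coe_eq_coe.2 hAB, ← Multiset.coe_add]
      rw [Finset.sum_eq_add_of_mem k ktwo (Finset.mem_univ _) (Finset.mem_univ _) hktwo.symm, hQone, hQtwo]
      rintro c _ ⟨h1, h2⟩
      simp [Qnew, h1, h2]
    have h1 : idxMakespan hm0 Qnew g < C g (P k) := by
      refine (Finset.sup'_lt_iff _).2 ?_
      intro i _
      change C g (Qnew i) < _
      simp only [Qnew]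
      split_ifs
      · exact hA
      · exact hB
      · rw [C_nil]; exact hpos
    have h2 := hPopt Qnew hQnew
    have h3 := le_mk hm0 P g k
    linarith
  · push Not at hM
    obtain ⟨j, hj, hMj⟩ := hM
    have h1 := C_single hK (NNf P hP k) (NNg P hP k) (fun i _ => upp _) (fun i _ => upp _)
      (fun i _ => low _) (fun i _ => low _) hj hMj
    rw [hlenk] at h1
    obtain ⟨ktwo, hktwo⟩ := exists_mem hQ (mem_lt hP k hj)
    have h2 := (single_le_C (NNf Q hQ ktwo) hktwo).trans (le_mk hm0 Q f ktwo)
    linarith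
end
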